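/- Let α, β, d, t, p, q ∈ ℝ. If L_q(R_p(L_t(0,0,α))) = (d, 0, β) (an LRL Dubins path), then cos p = (6 − d² + 2·cos(α − β) − 2d·(sin α − sin β)) / 8. (The middle-arc length of an LRL path satisfies this cosine identity.) -/

import Mathlib

open Real

/-- Left-turn operator: arc of length `v` along the unit left-turning circle. -/
noncomputable def Lop (v : ℝ) : ℝ × ℝ × ℝ → ℝ × ℝ × ℝ :=
  fun c => (c.1 + Real.sin (c.2.2 + v) - Real.sin c.2.2,
            c.2.1 - Real.cos (c.2.2 + v) + Real.cos c.2.2,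
            c.2.2 + v)

/-- Right-turn operator: arc of length `v` along the unit right-turning circle. -/
noncomputable def Rop (v : ℝ) : ℝ × ℝ × ℝ → ℝ × ℝ × ℝ :=
  fun c => (c.1 - Real.sin (c.2.2 - v) + Real.sin c.2.2,
            c.2.1 + Real.cos (c.2.2 - v) - Real.cos c.2.2,
            c.2.2 - v)

/-- Straight-motion operator: straight segment of length `v`. -/
noncomputable def Sop (v : ℝ) : ℝ × ℝ × ℝ → ℝ × ℝ × ℝ :=
  fun c => (c.1 + v * Real.cos c.2.2, c.2.1 + v * Real.sin c.2.2, c.2.2)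

/-!
A left turn fixes the center of the unit circle on the left of the path, and a right turn fixes
the center on the right, which lies at twice the unit normal from the left one. So along an LRL
path the left center moves only during the middle arc, by twice the difference of two unit normals
at angle `p`: its squared displacement is `8 * (1 - cos p)`. Computing the same displacement from
the endpoint configurations gives the identity.
-/

/-- The unit normal pointing to the left of the heading `φ`, with the plane encoded as `ℂ`. -/
noncomputable def leftNormal (φ : ℝ) : ℂ := ⟨-sin φ, cos φ⟩

/-- The center of the unit circle traced by a left turn from the configuration `c`. -/
noncomputable def leftCenter (c : ℝ × ℝ × ℝ) : ℂ := ⟨c.1, c.2.1⟩ + leftNormal c.2.2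

/-- The center of the unit circle traced by a right turn from the configuration `c`. -/
noncomputable def rightCenter (c : ℝ × ℝ × ℝ) : ℂ := ⟨c.1, c.2.1⟩ - leftNormal c.2.2

theorem normSq_leftNormal_sub (φ ψ : ℝ) :
    Complex.normSq (leftNormal φ - leftNormal ψ) = 2 * (1 - cos (φ - ψ)) := by
  simp only [leftNormal, Complex.normSq_apply, Complex.sub_re, Complex.sub_im, cos_sub]
  linear_combination sin_sq_add_cos_sq φ + sin_sq_add_cos_sq ψ

theorem leftCenter_eq_rightCenter_add (c : ℝ × ℝ × ℝ) :
    leftCenter c = rightCenter c + 2 * leftNormal c.2.2 := by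
  rw [leftCenter, rightCenter]
  ring

theorem leftCenter_Lop (v : ℝ) (c : ℝ × ℝ × ℝ) : leftCenter (Lop v c) = leftCenter c := by
  apply Complex.ext <;>
    simp only [leftCenter, leftNormal, Lop, Complex.add_re, Complex.add_im] <;> ring

theorem rightCenter_Rop (v : ℝ) (c : ℝ × ℝ × ℝ) : rightCenter (Rop v c) = rightCenter c := by
  apply Complex.ext <;>
    simp only [rightCenter, leftNormal, Rop, Complex.sub_re, Complex.sub_im] <;> ring

theorem normSq_leftCenter_Rop_sub (v : ℝ) (c : ℝ × ℝ × ℝ) :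
    Complex.normSq (leftCenter (Rop v c) - leftCenter c) = 8 * (1 - cos v) := by
  have displacement : leftCenter (Rop v c) - leftCenter c =
      2 * (leftNormal (c.2.2 - v) - leftNormal c.2.2) := by
    rw [leftCenter_eq_rightCenter_add, leftCenter_eq_rightCenter_add, rightCenter_Rop]
    simp only [Rop]
    ring
  rw [displacement, Complex.normSq_mul, normSq_leftNormal_sub, sub_sub_cancel_left, cos_neg,
    Complex.normSq_ofNat]
  ring

theorem normSq_leftCenter_LRL_sub (t p q : ℝ) (c : ℝ × ℝ × ℝ) :
    Complex.normSq (leftCenter (Lop q (Rop p (Lop t c))) - leftCenter c) = 8 * (1 - cos p) := by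
  rw [leftCenter_Lop, ← leftCenter_Lop t c, normSq_leftCenter_Rop_sub]

theorem normSq_leftCenter_sub (x y φ x' y' φ' : ℝ) :
    Complex.normSq (leftCenter (x', y', φ') - leftCenter (x, y, φ)) =
      (x' - x) ^ 2 + (y' - y) ^ 2 + 2 * (1 - cos (φ - φ')) +
        2 * ((x' - x) * (sin φ - sin φ') - (y' - y) * (cos φ - cos φ')) := by
  rw [← neg_sub φ' φ, cos_neg, ← normSq_leftNormal_sub]
  simp only [leftCenter, leftNormal, Complex.normSq_apply, Complex.sub_re, Complex.sub_im,
    Complex.add_re, Complex.add_im]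
  ring

theorem lrl_middle_arc_cos_general {x y φ x' y' φ' t p q : ℝ}
    (h : Lop q (Rop p (Lop t (x, y, φ))) = (x', y', φ')) :
    cos p = (6 - (x' - x) ^ 2 - (y' - y) ^ 2 + 2 * cos (φ - φ') -
      2 * ((x' - x) * (sin φ - sin φ') - (y' - y) * (cos φ - cos φ'))) / 8 := by
  have middle_arc := normSq_leftCenter_LRL_sub t p q (x, y, φ)
  rw [h, normSq_leftCenter_sub] at middle_arc
  linear_combination middle_arc / 8

theorem lrl_middle_arc_cos (α β d t p q : ℝ)
    (h : Lop q (Rop p (Lop t (0, 0, α))) = (d, 0, β)) :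
    Real.cos p = (6 - d ^ 2 + 2 * Real.cos (α - β) - 2 * d * (Real.sin α - Real.sin β)) / 8 := by
  rw [lrl_middle_arc_cos_general h]
  ring
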